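/- Let ω₁ ∈ ℝ, ω₂ > 0, b > 0, and let μ be a probability measure on [0, ∞) (the law of the nonnegative random interference Y). Then ∫_{[0,∞)} ∫₀^∞ ω₁ · erfc(√(ω₂ x/(y + b))) · e^{−x} dx dμ(y) = ω₁ − (ω₁/√π) · ∫₀^∞ z^{−1/2} · L_μ(z/ω₂) · exp(−z(1 + b/ω₂)) dz, where L_μ(s) = ∫_{[0,∞)} e^{−s y} dμ(y) is the Laplace transform of μ and erfc(t) = (2/√π) · ∫_t^∞ e^{−u²} du. -/

import Mathlib

/-!
The substitution `z = u²` turns `erfc √t` into `π^(-1/2) ∫_t^∞ z^(-1/2) e^(-z) dz`, the tail of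
the Gamma density with shape `1/2`. Averaging over an exponential `x`, Fubini replaces the event
`x / k < z` by its probability `1 - e^(-z k)`; the first term contributes `Γ(1/2) / √π = 1`.
Averaging over `k`, a second use of Fubini turns `e^(-z k)` into the Laplace transform of `k`
at `z`.
-/

open Real MeasureTheory

/-- The complementary error function `erfc(t) = (2/√π)·∫_t^∞ e^{−u²} du`. -/
noncomputable def erfc (t : ℝ) : ℝ :=
  (2 / Real.sqrt π) * ∫ u in Set.Ioi t, Real.exp (-u ^ 2)

section Fubini

variable {α β : Type*} [MeasurableSpace α] [MeasurableSpace β] {μ : Measure α} {ν : Measure β}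
  [SFinite μ] [SFinite ν]

lemma integral_mul_setIntegral_swap {𝕜 : Type*} [RCLike 𝕜] {f : α → 𝕜} {g : β → 𝕜}
    (hf : Integrable f μ) (hg : Integrable g ν) {S : Set (α × β)} (hS : MeasurableSet S) :
    ∫ x, f x * ∫ y in {y | (x, y) ∈ S}, g y ∂ν ∂μ =
      ∫ y, (∫ x in {x | (x, y) ∈ S}, f x ∂μ) * g y ∂ν := by
  have hswap := integral_integral_swap (f := fun x y ↦ S.indicator (fun p ↦ f p.1 * g p.2) (x, y))
    ((hf.mul_prod hg).indicator hS)
  calc ∫ x, f x * ∫ y in {y | (x, y) ∈ S}, g y ∂ν ∂μ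
      = ∫ x, ∫ y, S.indicator (fun p ↦ f p.1 * g p.2) (x, y) ∂ν ∂μ := by
        refine integral_congr_ae (.of_forall fun x ↦ ?_)
        dsimp only
        rw [← integral_const_mul]
        exact (integral_indicator (hS.preimage measurable_prodMk_left)).symm
    _ = ∫ y, ∫ x, S.indicator (fun p ↦ f p.1 * g p.2) (x, y) ∂μ ∂ν := hswap
    _ = ∫ y, (∫ x in {x | (x, y) ∈ S}, f x ∂μ) * g y ∂ν := by
        refine integral_congr_ae (.of_forall fun y ↦ ?_)
        dsimp only
        rw [← integral_mul_const]
        exact integral_indicator (hS.preimage measurable_prodMk_right)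

end Fubini

lemma norm_exp_neg_le_one {x : ℝ} (hx : 0 ≤ x) : ‖exp (-x)‖ ≤ 1 := by
  rwa [norm_of_nonneg (exp_pos _).le, exp_le_one_iff, neg_nonpos]

lemma integrableOn_mul_exp_neg_mul {g : ℝ → ℝ} {k : ℝ} (hg : IntegrableOn g (Set.Ioi 0))
    (hk : 0 ≤ k) : IntegrableOn (fun z ↦ g z * exp (-(z * k))) (Set.Ioi 0) := by
  refine hg.mul_bdd (c := 1) (by fun_prop) ?_
  filter_upwards [ae_restrict_mem measurableSet_Ioi] with z hz
  exact norm_exp_neg_le_one (mul_nonneg (le_of_lt hz) hk)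

section LaplaceTransform

variable {Ω : Type*} [MeasurableSpace Ω] {μ : Measure Ω} [IsFiniteMeasure μ] {K : Ω → ℝ}
  {g : ℝ → ℝ}

lemma integrable_prod_mul_exp_neg_mul (hK : AEMeasurable K μ) (hK₀ : ∀ᵐ ω ∂μ, 0 ≤ K ω)
    (hg : IntegrableOn g (Set.Ioi 0)) :
    Integrable (fun p : Ω × ℝ ↦ g p.2 * exp (-(p.2 * K p.1)))
      (μ.prod (volume.restrict (Set.Ioi 0))) := by
  have hKm : AEMeasurable (fun p : Ω × ℝ ↦ K p.1) (μ.prod (volume.restrict (Set.Ioi 0))) :=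
    hK.comp_quasiMeasurePreserving Measure.quasiMeasurePreserving_fst
  have hz : ∀ᵐ p ∂μ.prod (volume.restrict (Set.Ioi (0 : ℝ))), p.2 ∈ Set.Ioi (0 : ℝ) :=
    Measure.quasiMeasurePreserving_snd.ae (ae_restrict_mem measurableSet_Ioi)
  have hKp : ∀ᵐ p ∂μ.prod (volume.restrict (Set.Ioi (0 : ℝ))), 0 ≤ K p.1 :=
    Measure.quasiMeasurePreserving_fst.ae hK₀
  refine (hg.comp_snd μ).mul_bdd (c := 1)
    (measurable_snd.aemeasurable.mul hKm).neg.exp.aestronglyMeasurable ?_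
  filter_upwards [hz, hKp] with p hz hKp
  exact norm_exp_neg_le_one (mul_nonneg (le_of_lt hz) hKp)

lemma integral_setIntegral_mul_exp_neg_mul (hK : AEMeasurable K μ) (hK₀ : ∀ᵐ ω ∂μ, 0 ≤ K ω)
    (hg : IntegrableOn g (Set.Ioi 0)) :
    ∫ ω, (∫ z in Set.Ioi 0, g z * exp (-(z * K ω))) ∂μ =
      ∫ z in Set.Ioi 0, g z * ∫ ω, exp (-(z * K ω)) ∂μ := by
  simp_rw [← integral_const_mul]
  exact integral_integral_swap (integrable_prod_mul_exp_neg_mul hK hK₀ hg)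

end LaplaceTransform

lemma setIntegral_Ioo_exp_neg {a b : ℝ} (hab : a ≤ b) :
    ∫ x in Set.Ioo a b, exp (-x) = exp (-a) - exp (-b) := by
  rw [← integral_Ioc_eq_integral_Ioo, ← intervalIntegral.integral_of_le hab,
    intervalIntegral.integral_comp_neg exp, integral_exp]

lemma integrableOn_rpow_neg_half_mul_exp_neg :
    IntegrableOn (fun z : ℝ ↦ z ^ (-(1 / 2) : ℝ) * exp (-z)) (Set.Ioi 0) := by
  convert GammaIntegral_convergent one_half_pos using 2 with z
  rw [mul_comm]
  norm_num

lemma integral_rpow_neg_half_mul_exp_neg :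
    ∫ z in Set.Ioi (0 : ℝ), z ^ (-(1 / 2) : ℝ) * exp (-z) = √π := by
  rw [← Gamma_one_half_eq, Gamma_eq_integral one_half_pos]
  congr with z
  rw [mul_comm]
  norm_num

lemma image_sqrt_Ioi {t : ℝ} (ht : 0 ≤ t) : sqrt '' Set.Ioi t = Set.Ioi √t := by
  ext u
  constructor
  · rintro ⟨z, hz, rfl⟩
    exact sqrt_lt_sqrt ht hz
  · intro hu
    exact ⟨u ^ 2, lt_sq_of_sqrt_lt hu, sqrt_sq ((sqrt_nonneg t).trans (le_of_lt hu))⟩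

lemma erfc_sqrt {t : ℝ} (ht : 0 ≤ t) :
    erfc √t = (√π)⁻¹ * ∫ z in Set.Ioi t, z ^ (-(1 / 2) : ℝ) * exp (-z) := by
  have hderiv : ∀ z ∈ Set.Ioi t, HasDerivWithinAt sqrt (1 / (2 * √z)) (Set.Ioi t) z := fun z hz ↦
    (hasDerivAt_sqrt (ht.trans_lt hz).ne').hasDerivWithinAt
  have hsubst : ∫ u in Set.Ioi √t, exp (-u ^ 2) =
      ∫ z in Set.Ioi t, 2⁻¹ * (z ^ (-(1 / 2) : ℝ) * exp (-z)) := by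
    rw [← image_sqrt_Ioi ht, integral_image_eq_integral_deriv_smul_of_monotoneOn measurableSet_Ioi
      hderiv fun _ _ _ _ h ↦ sqrt_le_sqrt h]
    refine setIntegral_congr_fun measurableSet_Ioi fun z hz ↦ ?_
    have hz₀ : 0 ≤ z := ht.trans (le_of_lt hz)
    rw [sq_sqrt hz₀, rpow_neg hz₀, ← sqrt_eq_rpow, smul_eq_mul]
    ring
  rw [erfc, hsubst, integral_const_mul]
  ring

lemma integral_erfc_sqrt_div_mul_exp_neg {k : ℝ} (hk : 0 < k) :
    ∫ x in Set.Ioi 0, erfc √(x / k) * exp (-x) =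
      1 - (√π)⁻¹ * ∫ z in Set.Ioi 0, z ^ (-(1 / 2) : ℝ) * exp (-z) * exp (-(z * k)) := by
  set g : ℝ → ℝ := fun z ↦ z ^ (-(1 / 2) : ℝ) * exp (-z)
  have hg_int : IntegrableOn g (Set.Ioi 0) := integrableOn_rpow_neg_half_mul_exp_neg
  have hS : MeasurableSet {p : ℝ × ℝ | p.1 / k < p.2} :=
    measurableSet_lt (by fun_prop) (by fun_prop)
  calc ∫ x in Set.Ioi 0, erfc √(x / k) * exp (-x)
      = (√π)⁻¹ * ∫ x in Set.Ioi 0, exp (-x) *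
          ∫ z in {z | x / k < z}, g z ∂volume.restrict (Set.Ioi 0) := by
        rw [← integral_const_mul]
        refine setIntegral_congr_fun measurableSet_Ioi fun x hx ↦ ?_
        have hxk : 0 ≤ x / k := div_nonneg (le_of_lt hx) hk.le
        rw [erfc_sqrt hxk, Set.Ioi_def, Measure.restrict_restrict measurableSet_Ioi,
          Set.inter_eq_left.mpr (Set.Ioi_subset_Ioi hxk)]
        ring
    _ = (√π)⁻¹ * ∫ z in Set.Ioi 0,
          (∫ x in {x | x / k < z}, exp (-x) ∂volume.restrict (Set.Ioi 0)) * g z :=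
        congrArg _ (integral_mul_setIntegral_swap (integrableOn_exp_neg_Ioi 0) hg_int hS)
    _ = (√π)⁻¹ * ∫ z in Set.Ioi 0, (g z - g z * exp (-(z * k))) := by
        congr 1
        refine setIntegral_congr_fun measurableSet_Ioi fun z hz ↦ ?_
        have hzk : 0 ≤ z * k := mul_nonneg (le_of_lt hz) hk.le
        simp_rw [div_lt_iff₀ hk]
        rw [Set.Iio_def, Measure.restrict_restrict measurableSet_Iio, Set.Iio_inter_Ioi,
          setIntegral_Ioo_exp_neg hzk, neg_zero, exp_zero]
        ring
    _ = 1 - (√π)⁻¹ * ∫ z in Set.Ioi 0, g z * exp (-(z * k)) := by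
        rw [integral_sub hg_int (integrableOn_mul_exp_neg_mul hg_int hk.le),
          integral_rpow_neg_half_mul_exp_neg, mul_sub, inv_mul_cancel₀ (sqrt_pos.mpr pi_pos).ne']

lemma integral_integral_erfc_sqrt_div_mul_exp_neg {Ω : Type*} [MeasurableSpace Ω] {μ : Measure Ω}
    [IsFiniteMeasure μ] {K : Ω → ℝ} (hK : AEMeasurable K μ) (hK₀ : ∀ᵐ ω ∂μ, 0 < K ω) :
    ∫ ω, (∫ x in Set.Ioi 0, erfc √(x / K ω) * exp (-x)) ∂μ =
      μ.real Set.univ - (√π)⁻¹ *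
        ∫ z in Set.Ioi 0, z ^ (-(1 / 2) : ℝ) * exp (-z) * ∫ ω, exp (-(z * K ω)) ∂μ := by
  have hK₀' : ∀ᵐ ω ∂μ, 0 ≤ K ω := hK₀.mono fun _ ↦ le_of_lt
  have hexp_int := (integrable_prod_mul_exp_neg_mul hK hK₀'
    integrableOn_rpow_neg_half_mul_exp_neg).integral_prod_left
  rw [integral_congr_ae (hK₀.mono fun _ ↦ integral_erfc_sqrt_div_mul_exp_neg),
    integral_sub (integrable_const 1) (hexp_int.const_mul _), integral_const_mul,
    integral_setIntegral_mul_exp_neg_mul hK hK₀' integrableOn_rpow_neg_half_mul_exp_neg,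
    integral_const, smul_eq_mul, mul_one]

theorem stmt12_general {Ω : Type*} [MeasurableSpace Ω] {μ : Measure Ω} [IsFiniteMeasure μ]
    {Y : Ω → ℝ} (hY : AEMeasurable Y μ) (ω₁ : ℝ) {ω₂ b : ℝ} (hω₂ : 0 < ω₂)
    (hYb : ∀ᵐ ω ∂μ, 0 < Y ω + b) :
    ∫ ω, (∫ x in Set.Ioi 0, ω₁ * erfc √(ω₂ * x / (Y ω + b)) * exp (-x)) ∂μ =
      ω₁ * μ.real Set.univ - (ω₁ / √π) *
        ∫ z in Set.Ioi 0, z ^ (-(1 / 2) : ℝ) * (∫ ω, exp (-(z / ω₂) * Y ω) ∂μ) *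
          exp (-(z * (1 + b / ω₂))) := by
  have hscale (x y : ℝ) : ω₂ * x / (y + b) = x / ((y + b) / ω₂) := by
    rw [div_div_eq_mul_div, mul_comm]
  have hexp (z : ℝ) : exp (-z) * ∫ ω, exp (-(z * ((Y ω + b) / ω₂))) ∂μ =
      (∫ ω, exp (-(z / ω₂) * Y ω) ∂μ) * exp (-(z * (1 + b / ω₂))) := by
    rw [← integral_const_mul, ← integral_mul_const]
    simp_rw [← exp_add]
    congr with ω
    ring_nf
  have hlaw := integral_integral_erfc_sqrt_div_mul_exp_neg ((hY.add_const b).div_const ω₂)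
    (hYb.mono fun _ h ↦ div_pos h hω₂)
  simp_rw [hscale, mul_assoc, integral_const_mul, hlaw, mul_assoc, hexp]
  ring

/-- Hamdi's averaging lemma, eq. (11): for a probability measure μ on
`[0, ∞)` (law of the nonnegative interference Y), ω₂ > 0, b > 0,
`∫∫ ω₁ erfc(√(ω₂ x/(y+b))) e^{−x} dx dμ(y)
   = ω₁ − (ω₁/√π) ∫₀^∞ z^{−1/2} L_μ(z/ω₂) e^{−z(1 + b/ω₂)} dz`,
where `L_μ(s) = ∫ e^{−s y} dμ(y)`. -/
theorem stmt12 (ω₁ ω₂ b : ℝ) (hω : 0 < ω₂) (hb : 0 < b)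
    (μ : Measure ℝ) [IsProbabilityMeasure μ] (hμ : μ (Set.Iio 0) = 0) :
    (∫ y in Set.Ici (0:ℝ),
        (∫ x in Set.Ioi (0:ℝ),
          ω₁ * erfc (Real.sqrt (ω₂ * x / (y + b))) * Real.exp (-x)) ∂μ)
      = ω₁ - (ω₁ / Real.sqrt π) *
          ∫ z in Set.Ioi (0:ℝ),
            z ^ (-(1/2) : ℝ) *
              (∫ y in Set.Ici (0:ℝ), Real.exp (-(z / ω₂) * y) ∂μ) *
              Real.exp (-(z * (1 + b / ω₂))) := by
  have hμ₀ : ∀ᵐ y ∂μ, y ∈ Set.Ici 0 :=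
    (measure_eq_zero_iff_ae_notMem.mp hμ).mono fun _ ↦ Set.notMem_Iio.mp
  rw [Measure.restrict_eq_self_of_ae_mem hμ₀]
  simpa only [id_eq, probReal_univ, mul_one] using stmt12_general aemeasurable_id ω₁ hω
    (hμ₀.mono fun _ hy ↦ add_pos_of_nonneg_of_pos hy hb)
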